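/- (Van Benthem–style characterisation of InqML) Let P be a finite set of atomic propositions and let C be any of the following four classes: all relational inquisitive modal models over P; all finite such models; all locally full such models; all finite locally full such models. Then for every class K of world-pointed models from C, the following are equivalent: (i) there is an InqML formula ψ with K = { (𝔐,w) ∈ C : M(𝔐),w ⊨ ψ }, where M(𝔐) is the inquisitive modal model induced by 𝔐; (ii) there is an FO formula φ(x) with one free world-sort variable such that K = { (𝔐,w) ∈ C : 𝔐 ⊨ φ(w) } and K is ~-invariant over C (whenever (𝔐,w) ∈ K, (𝔐',w') ∈ C and 𝔐,w ~ 𝔐',w', then (𝔐',w') ∈ K). -/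

import Mathlib

/-- Formulas of inquisitive modal logic InqML over atomic propositions `P`. -/
inductive InqForm (P : Type) : Type
  | atom : P → InqForm P
  | bot : InqForm P
  | and : InqForm P → InqForm P → InqForm P
  | impl : InqForm P → InqForm P → InqForm P
  | idisj : InqForm P → InqForm P → InqForm P
  | box : InqForm P → InqForm P
  | boxplus : InqForm P → InqForm P

/-- An inquisitive modal model `M = ⟨W, Σ, V⟩`. -/
structure InqModel (P : Type) where
  W : Type
  Sig : W → Set (Set W)
  Sig_nonempty : ∀ w, (Sig w).Nonempty
  Sig_downward : ∀ w, ∀ s ∈ Sig w, ∀ t ⊆ s, t ∈ Sig w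
  V : P → Set W

/-- `σ(w) = ⋃ Σ(w)`. -/
def InqModel.sigma {P : Type} (M : InqModel P) (w : M.W) : Set M.W :=
  ⋃₀ M.Sig w

/-- Support of a formula at an information state `s ⊆ W`. -/
def support {P : Type} (M : InqModel P) : InqForm P → Set M.W → Prop
  | .atom p, s => s ⊆ M.V p
  | .bot, s => s = ∅
  | .and φ ψ, s => support M φ s ∧ support M ψ s
  | .impl φ ψ, s => ∀ t ⊆ s, support M φ t → support M ψ t
  | .idisj φ ψ, s => support M φ s ∨ support M ψ s
  | .box φ, s => ∀ w ∈ s, support M φ (M.sigma w)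
  | .boxplus φ, s => ∀ w ∈ s, ∀ t ∈ M.Sig w, support M φ t

/-- Truth at a world: `M,w ⊨ φ` iff `M,{w} ⊨ φ`. -/
def truth {P : Type} (M : InqModel P) (w : M.W) (φ : InqForm P) : Prop :=
  support M φ {w}

/-- Modal depth: maximal nesting depth of `□` and `⊞`. -/
def mdepth {P : Type} : InqForm P → ℕ
  | .atom _ => 0
  | .bot => 0
  | .and φ ψ => max (mdepth φ) (mdepth ψ)
  | .impl φ ψ => max (mdepth φ) (mdepth ψ)
  | .idisj φ ψ => max (mdepth φ) (mdepth ψ)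
  | .box φ => mdepth φ + 1
  | .boxplus φ => mdepth φ + 1

/-- Lift of a relation between worlds to sets of worlds: every world on either
side is related to some world on the other side. -/
def StateRel {W W' : Type} (Z : W → W' → Prop) (s : Set W) (s' : Set W') : Prop :=
  (∀ w ∈ s, ∃ w' ∈ s', Z w w') ∧ (∀ w' ∈ s', ∃ w ∈ s, Z w w')

/-- `n`-bisimilarity between worlds of two inquisitive modal models. -/
def NBisimW {P : Type} (M M' : InqModel P) : ℕ → M.W → M'.W → Prop
  | 0, w, w' => ∀ p : P, w ∈ M.V p ↔ w' ∈ M'.V p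
  | n + 1, w, w' => (∀ p : P, w ∈ M.V p ↔ w' ∈ M'.V p) ∧
      (∀ s ∈ M.Sig w, ∃ s' ∈ M'.Sig w', StateRel (NBisimW M M' n) s s') ∧
      (∀ s' ∈ M'.Sig w', ∃ s ∈ M.Sig w, StateRel (NBisimW M M' n) s s')

/-- `n`-bisimilarity between information states. -/
def NBisimS {P : Type} (M M' : InqModel P) (n : ℕ) (s : Set M.W) (s' : Set M'.W) : Prop :=
  StateRel (NBisimW M M' n) s s'

/-- `Z` is a bisimulation between two inquisitive modal models. -/
def IsBisimulation {P : Type} (M M' : InqModel P) (Z : M.W → M'.W → Prop) : Prop :=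
  ∀ w w', Z w w' →
    (∀ p : P, w ∈ M.V p ↔ w' ∈ M'.V p) ∧
    (∀ s ∈ M.Sig w, ∃ s' ∈ M'.Sig w', StateRel Z s s') ∧
    (∀ s' ∈ M'.Sig w', ∃ s ∈ M.Sig w, StateRel Z s s')

/-- Bisimilarity of worlds: inclusion in some bisimulation. -/
def BisimW {P : Type} (M M' : InqModel P) (w : M.W) (w' : M'.W) : Prop :=
  ∃ Z, IsBisimulation M M' Z ∧ Z w w'

/-- Bisimilarity of information states. -/
def BisimS {P : Type} (M M' : InqModel P) (s : Set M.W) (s' : Set M'.W) : Prop :=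
  StateRel (BisimW M M') s s'

/-- Two-sorted first-order formulas over the signature with a world sort, a
state sort, binary relations `E` and `∈` between worlds and states, equality on
both sorts, and a unary predicate for each atom in `P`.  Variables are de
Bruijn indices; `FO P n m` has world-sort variables `Fin n` and state-sort
variables `Fin m`.  (Other connectives and `∃` are definable from `⊥`, `→`, `∀`.) -/
inductive FO (P : Type) : ℕ → ℕ → Type
  | eqW {n m : ℕ} : Fin n → Fin n → FO P n m
  | eqS {n m : ℕ} : Fin m → Fin m → FO P n m
  | rel {n m : ℕ} : Fin n → Fin m → FO P n m
  | mem {n m : ℕ} : Fin n → Fin m → FO P n m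
  | atom {n m : ℕ} : P → Fin n → FO P n m
  | fal {n m : ℕ} : FO P n m
  | imp {n m : ℕ} : FO P n m → FO P n m → FO P n m
  | allW {n m : ℕ} : FO P (n + 1) m → FO P n m
  | allS {n m : ℕ} : FO P n (m + 1) → FO P n m

/-- Satisfaction of a two-sorted first-order formula in the two-sorted
structure with world sort `W`, state sort `↥S`, relations `E` and membership,
and atom predicates given by `V`. -/
def FOsat {P W : Type} (S : Set (Set W)) (E : W → Set (Set W)) (V : P → Set W) :
    {n m : ℕ} → FO P n m → (Fin n → W) → (Fin m → ↥S) → Prop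
  | _, _, .eqW i j, a, _ => a i = a j
  | _, _, .eqS i j, _, b => b i = b j
  | _, _, .rel i j, a, b => (b j : Set W) ∈ E (a i)
  | _, _, .mem i j, a, b => a i ∈ (b j : Set W)
  | _, _, .atom p i, a, _ => a i ∈ V p
  | _, _, .fal, _, _ => False
  | _, _, .imp φ ψ, a, b => FOsat S E V φ a b → FOsat S E V ψ a b
  | _, _, .allW φ, a, b => ∀ w : W, FOsat S E V φ (Fin.cons w a) b
  | _, _, .allS φ, a, b => ∀ s : ↥S, FOsat S E V φ a (Fin.cons s b)

/-- A relational inquisitive modal model: a two-sorted structure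
`⟨W, S, E, ∈, (P_i)⟩` with `S ⊆ ℘(W)` (extensionality built in), satisfying
non-emptiness and downward closure. -/
structure RelModel (P : Type) where
  W : Type
  S : Set (Set W)
  E : W → Set (Set W)
  V : P → Set W
  wNonempty : Nonempty W
  sNonempty : S.Nonempty
  E_sub : ∀ w, E w ⊆ S
  E_nonempty : ∀ w, (E w).Nonempty
  downward : ∀ w, ∀ s ∈ E w, ∀ t ⊆ s, t ∈ S ∧ t ∈ E w

/-- The inquisitive modal model induced by a relational model:
`Σ(w) := E[w]`, `V(p_i) := P_i`. -/
def RelModel.toInq {P : Type} (𝔐 : RelModel P) : InqModel P where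
  W := 𝔐.W
  Sig := 𝔐.E
  Sig_nonempty := 𝔐.E_nonempty
  Sig_downward := fun w s hs t ht => (𝔐.downward w s hs t ht).2
  V := 𝔐.V

/-- Satisfaction of an `FO` formula with one free world-sort variable at a world. -/
def satW {P : Type} (𝔐 : RelModel P) (φ : FO P 1 0) (w : 𝔐.W) : Prop :=
  FOsat 𝔐.S 𝔐.E 𝔐.V φ (fun _ => w) (fun i => i.elim0)

/-- The accessibility set `R[w] = { v | v ∈ s for some s ∈ E[w] }`. -/
def RelModel.Racc {P : Type} (𝔐 : RelModel P) (w : 𝔐.W) : Set 𝔐.W :=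
  {v | ∃ s ∈ 𝔐.E w, v ∈ s}

/-- A relational model is locally full if `S ⊇ ℘(R[w])` for every world `w`. -/
def LocallyFull {P : Type} (𝔐 : RelModel P) : Prop :=
  ∀ w : 𝔐.W, ∀ t ⊆ 𝔐.Racc w, t ∈ 𝔐.S

/-! ### Finite types of worlds -/

/-- Depth-`n` types of worlds: an atomic type together with, for positive depth, the family of
sets of types of the preceding depth that are realised by the successor states. -/
def InqType (P : Type) : ℕ → Type
  | 0 => Set P
  | n + 1 => Set P × Set (Set (InqType P n))

theorem InqType.finite {P : Type} [Finite P] : ∀ n, Finite (InqType P n)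
  | 0 => inferInstanceAs (Finite (Set P))
  | n + 1 => by
    have := InqType.finite (P := P) n
    exact inferInstanceAs (Finite (Set P × Set (Set (InqType P n))))

/-- The depth-`n` type of a world. -/
def InqModel.type {P : Type} (M : InqModel P) : (n : ℕ) → M.W → InqType P n
  | 0, w => {p | w ∈ M.V p}
  | n + 1, w => ({p | w ∈ M.V p}, {Θ | ∃ s ∈ M.Sig w, InqModel.type M n '' s = Θ})

theorem type_zero_eq_iff {P : Type} (M : InqModel P) (w : M.W) (τ : Set P) :
    M.type 0 w = τ ↔ ∀ p, w ∈ M.V p ↔ p ∈ τ := by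
  simp only [InqModel.type]
  exact Set.ext_iff

theorem type_succ_eq_iff {P : Type} (M : InqModel P) (n : ℕ) (w : M.W)
    (τ : Set P × Set (Set (InqType P n))) :
    M.type (n + 1) w = τ ↔ (∀ p, w ∈ M.V p ↔ p ∈ τ.1) ∧
      ∀ Θ, (∃ s ∈ M.Sig w, M.type n '' s = Θ) ↔ Θ ∈ τ.2 := by
  obtain ⟨τ₁, τ₂⟩ := τ
  simp only [InqModel.type]
  refine Prod.mk_inj.trans (and_congr ?_ ?_) <;> exact Set.ext_iff

theorem type_succ_eq_type_succ_iff {P : Type} (M M' : InqModel P) (n : ℕ) (w : M.W) (w' : M'.W) :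
    M.type (n + 1) w = M'.type (n + 1) w' ↔ (∀ p, w ∈ M.V p ↔ w' ∈ M'.V p) ∧
      (∀ s ∈ M.Sig w, ∃ s' ∈ M'.Sig w', M.type n '' s = M'.type n '' s') ∧
      (∀ s' ∈ M'.Sig w', ∃ s ∈ M.Sig w, M.type n '' s = M'.type n '' s') := by
  refine (type_succ_eq_iff M n w _).trans (and_congr Iff.rfl ?_)
  constructor
  · intro h
    refine ⟨fun s hs => ?_, fun s' hs' => ?_⟩
    · obtain ⟨s', hs', h'⟩ := (h _).1 ⟨s, hs, rfl⟩
      exact ⟨s', hs', h'.symm⟩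
    · exact (h _).2 ⟨s', hs', rfl⟩
  · rintro ⟨h₁, h₂⟩ Θ
    constructor
    · rintro ⟨s, hs, rfl⟩
      obtain ⟨s', hs', h'⟩ := h₁ s hs
      exact ⟨s', hs', h'.symm⟩
    · rintro ⟨s', hs', rfl⟩
      exact h₂ s' hs'

theorem mem_V_iff_of_type_eq {P : Type} {M M' : InqModel P} {n : ℕ} {w : M.W} {w' : M'.W}
    (h : M.type n w = M'.type n w') (p : P) : w ∈ M.V p ↔ w' ∈ M'.V p := by
  cases n with
  | zero => exact (type_zero_eq_iff M w _).1 h p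
  | succ n => exact ((type_succ_eq_type_succ_iff M M' n w w').1 h).1 p

theorem stateRel_type_iff {P : Type} (M M' : InqModel P) (n : ℕ) (s : Set M.W) (s' : Set M'.W) :
    StateRel (fun w w' => M.type n w = M'.type n w') s s' ↔ M.type n '' s = M'.type n '' s' := by
  constructor
  · rintro ⟨h₁, h₂⟩
    refine Set.Subset.antisymm ?_ ?_
    · rintro _ ⟨w, hw, rfl⟩
      obtain ⟨w', hw', h⟩ := h₁ w hw
      exact ⟨w', hw', h.symm⟩
    · rintro _ ⟨w', hw', rfl⟩
      exact h₂ w' hw'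
  · intro h
    refine ⟨fun w hw => ?_, fun w' hw' => ?_⟩
    · obtain ⟨w', hw', h'⟩ := h.subset ⟨w, hw, rfl⟩
      exact ⟨w', hw', h'.symm⟩
    · exact h.superset ⟨w', hw', rfl⟩

theorem BisimW.type_eq {P : Type} {M M' : InqModel P} {w : M.W} {w' : M'.W}
    (h : BisimW M M' w w') (n : ℕ) : M.type n w = M'.type n w' := by
  obtain ⟨Z, hZ, hw⟩ := h
  induction n generalizing w w' with
  | zero => exact (type_zero_eq_iff M w _).2 (hZ w w' hw).1
  | succ n ih =>
    obtain ⟨h₁, h₂, h₃⟩ := hZ w w' hw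
    have image_eq : ∀ s s', StateRel Z s s' → M.type n '' s = M'.type n '' s' := fun s s' hs =>
      (stateRel_type_iff M M' n s s').1
        ⟨fun v hv => (hs.1 v hv).imp fun _ h => ⟨h.1, ih h.2⟩,
          fun v hv => (hs.2 v hv).imp fun _ h => ⟨h.1, ih h.2⟩⟩
    refine (type_succ_eq_type_succ_iff M M' n w w').2 ⟨h₁, fun s hs => ?_, fun s' hs' => ?_⟩
    · exact (h₂ s hs).imp fun _ h => ⟨h.1, image_eq _ _ h.2⟩
    · exact (h₃ s' hs').imp fun _ h => ⟨h.1, image_eq _ _ h.2⟩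

theorem BisimW.symm {P : Type} {M M' : InqModel P} {w : M.W} {w' : M'.W}
    (h : BisimW M M' w w') : BisimW M' M w' w := by
  obtain ⟨Z, hZ, hw⟩ := h
  refine ⟨fun v' v => Z v v', fun v' v hv => ?_, hw⟩
  obtain ⟨h₁, h₂, h₃⟩ := hZ v v' hv
  exact ⟨fun p => (h₁ p).symm, fun s hs => (h₃ s hs).imp fun _ h => ⟨h.1, h.2.2, h.2.1⟩,
    fun s hs => (h₂ s hs).imp fun _ h => ⟨h.1, h.2.2, h.2.1⟩⟩

/-- The set of types of `⋃ Σ(w)` is determined by the type of `w`. -/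
theorem image_type_sigma_eq {P : Type} {M M' : InqModel P} {n : ℕ} {w : M.W} {w' : M'.W}
    (h : M.type (n + 1) w = M'.type (n + 1) w') :
    M.type n '' M.sigma w = M'.type n '' M'.sigma w' := by
  obtain ⟨-, h₂, h₃⟩ := (type_succ_eq_type_succ_iff M M' n w w').1 h
  refine Set.Subset.antisymm ?_ ?_
  · rintro _ ⟨v, ⟨s, hs, hv⟩, rfl⟩
    obtain ⟨s', hs', h'⟩ := h₂ s hs
    obtain ⟨v', hv', h''⟩ := h'.subset ⟨v, hv, rfl⟩
    exact ⟨v', ⟨s', hs', hv'⟩, h''⟩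
  · rintro _ ⟨v', ⟨s', hs', hv'⟩, rfl⟩
    obtain ⟨s, hs, h'⟩ := h₃ s' hs'
    obtain ⟨v, hv, htype⟩ := h'.superset ⟨v', hv', rfl⟩
    exact ⟨v, ⟨s, hs, hv⟩, htype⟩

/-- Support of a formula at a state is determined by the set of types of its worlds. -/
theorem support_of_image_type_eq {P : Type} {φ : InqForm P} {M M' : InqModel P} {n : ℕ}
    {s : Set M.W} {s' : Set M'.W} (hn : mdepth φ ≤ n) (h : M.type n '' s = M'.type n '' s')
    (hs : support M φ s) : support M' φ s' := by
  induction φ generalizing M M' n s s' with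
  | atom p =>
    intro w' hw'
    obtain ⟨w, hw, hww'⟩ := h.superset ⟨w', hw', rfl⟩
    exact (mem_V_iff_of_type_eq hww' p).1 (hs hw)
  | bot =>
    have hs : s = ∅ := hs
    subst hs
    exact Set.image_eq_empty.1 (h.symm.trans (Set.image_empty _))
  | and φ ψ ihφ ihψ =>
    exact ⟨ihφ ((le_max_left _ _).trans hn) h hs.1, ihψ ((le_max_right _ _).trans hn) h hs.2⟩
  | idisj φ ψ ihφ ihψ =>
    exact hs.imp (ihφ ((le_max_left _ _).trans hn) h) (ihψ ((le_max_right _ _).trans hn) h)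
  | impl φ ψ ihφ ihψ =>
    intro t' ht' hφ
    obtain ⟨t, ht, htt'⟩ := Set.subset_image_iff.1 ((Set.image_mono ht').trans h.superset)
    exact ihψ ((le_max_right _ _).trans hn) htt'
      (hs t ht (ihφ ((le_max_left _ _).trans hn) htt'.symm hφ))
  | box φ ih =>
    obtain ⟨n, rfl⟩ := Nat.exists_eq_add_of_le' (le_trans (Nat.le_add_left 1 _) hn)
    intro w' hw'
    obtain ⟨w, hw, hww'⟩ := h.superset ⟨w', hw', rfl⟩
    exact ih (Nat.le_of_succ_le_succ hn) (image_type_sigma_eq hww') (hs w hw)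
  | boxplus φ ih =>
    obtain ⟨n, rfl⟩ := Nat.exists_eq_add_of_le' (le_trans (Nat.le_add_left 1 _) hn)
    intro w' hw' t' ht'
    obtain ⟨w, hw, hww'⟩ := h.superset ⟨w', hw', rfl⟩
    obtain ⟨t, ht, htt'⟩ := ((type_succ_eq_type_succ_iff M M' n w w').1 hww').2.2 t' ht'
    exact ih (Nat.le_of_succ_le_succ hn) htt' (hs w hw t ht)

/-- Truth of a formula at a world is determined by the type of the world. -/
theorem truth_iff_of_type_eq {P : Type} {φ : InqForm P} {M M' : InqModel P}
    {w : M.W} {w' : M'.W} (h : M.type (mdepth φ) w = M'.type (mdepth φ) w') :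
    truth M w φ ↔ truth M' w' φ := by
  have himage : M.type (mdepth φ) '' {w} = M'.type (mdepth φ) '' {w'} := by
    rw [Set.image_singleton, Set.image_singleton, h]
  exact ⟨support_of_image_type_eq le_rfl himage,
    support_of_image_type_eq le_rfl himage.symm⟩

/-- A set of types is realised by some successor state iff it is covered by one. -/
theorem exists_image_type_eq_iff {P : Type} (M : InqModel P) (n : ℕ) (w : M.W)
    (Θ : Set (InqType P n)) :
    (∃ s ∈ M.Sig w, M.type n '' s = Θ) ↔ ∃ s ∈ M.Sig w, ∀ τ ∈ Θ, ∃ v ∈ s, M.type n v = τ := by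
  constructor
  · rintro ⟨s, hs, rfl⟩
    exact ⟨s, hs, fun τ hτ => hτ⟩
  · rintro ⟨s, hs, h⟩
    obtain ⟨t, ht, htΘ⟩ := Set.subset_image_iff.1 (show Θ ⊆ M.type n '' s from h)
    exact ⟨t, M.Sig_downward w s hs t ht, htΘ⟩

/-! ### Types are definable in InqML -/

/-- A property of worlds expressed by a truth-conditional InqML formula. -/
def InqDefinable {P : Type} (A : (M : InqModel P) → M.W → Prop) : Prop :=
  ∃ φ : InqForm P, ∀ (M : InqModel P) (s : Set M.W), support M φ s ↔ ∀ w ∈ s, A M w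

namespace InqDefinable

theorem congr {P : Type} {A B : (M : InqModel P) → M.W → Prop} (hA : InqDefinable A)
    (h : ∀ M w, B M w ↔ A M w) : InqDefinable B := by
  obtain ⟨φ, hφ⟩ := hA
  exact ⟨φ, fun M s => by simp only [hφ, h]⟩

theorem bot {P : Type} : InqDefinable (P := P) fun _ _ => False :=
  ⟨.bot, fun _ _ => Set.eq_empty_iff_forall_notMem⟩

theorem and {P : Type} {A B : (M : InqModel P) → M.W → Prop} (hA : InqDefinable A)
    (hB : InqDefinable B) : InqDefinable fun M w => A M w ∧ B M w := by
  obtain ⟨φ, hφ⟩ := hA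
  obtain ⟨ψ, hψ⟩ := hB
  refine ⟨.and φ ψ, fun M s => ?_⟩
  simp only [support, hφ, hψ]
  exact ⟨fun h w hw => ⟨h.1 w hw, h.2 w hw⟩,
    fun h => ⟨fun w hw => (h w hw).1, fun w hw => (h w hw).2⟩⟩

theorem imp {P : Type} {A B : (M : InqModel P) → M.W → Prop} (hA : InqDefinable A)
    (hB : InqDefinable B) : InqDefinable fun M w => A M w → B M w := by
  obtain ⟨φ, hφ⟩ := hA
  obtain ⟨ψ, hψ⟩ := hB
  refine ⟨.impl φ ψ, fun M s => ?_⟩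
  simp only [support, hφ, hψ]
  constructor
  · intro h w hw hAw
    exact h {w} (Set.singleton_subset_iff.2 hw) (fun v hv => hv ▸ hAw) w rfl
  · exact fun h t ht hAt w hw => h w (ht hw) (hAt w hw)

theorem not {P : Type} {A : (M : InqModel P) → M.W → Prop} (hA : InqDefinable A) :
    InqDefinable fun M w => ¬ A M w :=
  hA.imp bot

theorem const {P : Type} (c : Prop) : InqDefinable (P := P) fun _ _ => c := by
  by_cases hc : c
  · exact bot.not.congr fun _ _ => by simp [hc]
  · exact bot.congr fun _ _ => by simp [hc]

theorem iff {P : Type} {A B : (M : InqModel P) → M.W → Prop} (hA : InqDefinable A)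
    (hB : InqDefinable B) : InqDefinable fun M w => A M w ↔ B M w :=
  ((hA.imp hB).and (hB.imp hA)).congr fun _ _ => iff_iff_implies_and_implies

theorem forall_mem {P ι : Type} {A : ι → (M : InqModel P) → M.W → Prop} (X : Set ι)
    (hX : X.Finite) (hA : ∀ i, InqDefinable (A i)) :
    InqDefinable fun M w => ∀ i ∈ X, A i M w := by
  induction X, hX using Set.Finite.induction_on with
  | empty => exact (const True).congr fun _ _ => by simp
  | @insert i X _ _ ih => exact ((hA i).and ih).congr fun _ _ => by simp

theorem forall_finite {P ι : Type} [Finite ι] {A : ι → (M : InqModel P) → M.W → Prop}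
    (hA : ∀ i, InqDefinable (A i)) : InqDefinable fun M w => ∀ i, A i M w :=
  (forall_mem Set.univ Set.finite_univ hA).congr fun _ _ => by simp

theorem exists_mem {P ι : Type} [Finite ι] {A : ι → (M : InqModel P) → M.W → Prop} (X : Set ι)
    (hA : ∀ i, InqDefinable (A i)) : InqDefinable fun M w => ∃ i ∈ X, A i M w :=
  (forall_mem X X.toFinite fun i => (hA i).not).not.congr fun _ _ => by simp

end InqDefinable

/-- Finite inquisitive disjunctions. -/
theorem exists_idisj {P ι : Type} (X : Set ι) (hX : X.Finite) (f : ι → InqForm P) :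
    ∃ φ : InqForm P, ∀ (M : InqModel P) (s : Set M.W),
      support M φ s ↔ s = ∅ ∨ ∃ i ∈ X, support M (f i) s := by
  induction X, hX using Set.Finite.induction_on with
  | empty => exact ⟨.bot, fun M s => by simp [support]⟩
  | @insert i X _ _ ih =>
    obtain ⟨φ, hφ⟩ := ih
    refine ⟨.idisj (f i) φ, fun M s => ?_⟩
    simp only [support, hφ, Set.exists_mem_insert]
    tauto

theorem inqDefinable_realised {P : Type} [Finite P] {n : ℕ}
    (ih : ∀ τ : InqType P n, InqDefinable fun M w => M.type n w = τ) (Θ : Set (InqType P n)) :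
    InqDefinable fun M w => ∃ s ∈ M.Sig w, M.type n '' s = Θ := by
  have := InqType.finite (P := P) n
  rcases Θ.eq_empty_or_nonempty with rfl | ⟨τ₀, hτ₀⟩
  · refine (InqDefinable.const True).congr fun M w => iff_true_intro ?_
    obtain ⟨s, hs⟩ := M.Sig_nonempty w
    exact ⟨∅, M.Sig_downward w s hs ∅ (Set.empty_subset s), Set.image_empty _⟩
  · choose f hf using fun τ => (ih τ).not
    obtain ⟨φ, hφ⟩ := exists_idisj Θ Θ.toFinite f
    have hdef : InqDefinable fun M w => ∀ s ∈ M.Sig w, support M φ s :=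
      ⟨.boxplus φ, fun _ _ => Iff.rfl⟩
    refine hdef.not.congr fun M w => ?_
    rw [exists_image_type_eq_iff]
    simp only [hφ, hf]
    push Not
    refine exists_congr fun s => and_congr_right fun _ => ⟨fun h => ⟨?_, h⟩, fun h => h.2⟩
    obtain ⟨v, hv, -⟩ := h τ₀ hτ₀
    exact ⟨v, hv⟩

theorem inqDefinable_type_eq {P : Type} [Finite P] (n : ℕ) (τ : InqType P n) :
    InqDefinable fun M w => M.type n w = τ := by
  have hatom : ∀ p : P, InqDefinable fun M w => w ∈ M.V p := fun p => ⟨.atom p, fun _ _ => Iff.rfl⟩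
  induction n with
  | zero =>
    exact (InqDefinable.forall_finite fun p => (hatom p).iff (.const (p ∈ show Set P from τ))).congr
      fun M w => type_zero_eq_iff M w τ
  | succ n ih =>
    have := InqType.finite (P := P) n
    obtain ⟨τ₁, τ₂⟩ := τ
    exact ((InqDefinable.forall_finite fun p => (hatom p).iff (.const (p ∈ τ₁))).and
      (InqDefinable.forall_finite fun Θ =>
        (inqDefinable_realised ih Θ).iff (.const (Θ ∈ τ₂)))).congr
      fun M w => type_succ_eq_iff M n w (τ₁, τ₂)

/-! ### Types are definable in first-order logic -/

/-- A property of assignments in relational models expressed by a first-order formula. -/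
def FODefinable {P : Type} {n m : ℕ}
    (A : (𝔐 : RelModel P) → (Fin n → 𝔐.W) → (Fin m → 𝔐.S) → Prop) : Prop :=
  ∃ φ : FO P n m, ∀ (𝔐 : RelModel P) (a : Fin n → 𝔐.W) (b : Fin m → 𝔐.S),
    FOsat 𝔐.S 𝔐.E 𝔐.V φ a b ↔ A 𝔐 a b

namespace FODefinable

variable {P : Type} {n m : ℕ}
  {A B : (𝔐 : RelModel P) → (Fin n → 𝔐.W) → (Fin m → 𝔐.S) → Prop}

theorem congr (hA : FODefinable A) (h : ∀ 𝔐 a b, B 𝔐 a b ↔ A 𝔐 a b) : FODefinable B := by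
  obtain ⟨φ, hφ⟩ := hA
  exact ⟨φ, fun 𝔐 a b => (hφ 𝔐 a b).trans (h 𝔐 a b).symm⟩

theorem imp (hA : FODefinable A) (hB : FODefinable B) :
    FODefinable fun 𝔐 a b => A 𝔐 a b → B 𝔐 a b := by
  obtain ⟨φ, hφ⟩ := hA
  obtain ⟨ψ, hψ⟩ := hB
  exact ⟨.imp φ ψ, fun 𝔐 a b => by simp only [FOsat, hφ, hψ]⟩

theorem bot : FODefinable (P := P) (n := n) (m := m) fun _ _ _ => False :=
  ⟨.fal, fun _ _ _ => Iff.rfl⟩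

theorem not (hA : FODefinable A) : FODefinable fun 𝔐 a b => ¬ A 𝔐 a b :=
  hA.imp bot

theorem const (c : Prop) : FODefinable (P := P) (n := n) (m := m) fun _ _ _ => c := by
  by_cases hc : c
  · exact bot.not.congr fun _ _ _ => by simp [hc]
  · exact bot.congr fun _ _ _ => by simp [hc]

theorem and (hA : FODefinable A) (hB : FODefinable B) :
    FODefinable fun 𝔐 a b => A 𝔐 a b ∧ B 𝔐 a b :=
  (hA.imp hB.not).not.congr fun _ _ _ => by tauto

theorem iff (hA : FODefinable A) (hB : FODefinable B) :
    FODefinable fun 𝔐 a b => A 𝔐 a b ↔ B 𝔐 a b :=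
  ((hA.imp hB).and (hB.imp hA)).congr fun _ _ _ => iff_iff_implies_and_implies

theorem forall_mem {ι : Type}
    {A : ι → (𝔐 : RelModel P) → (Fin n → 𝔐.W) → (Fin m → 𝔐.S) → Prop} (X : Set ι)
    (hX : X.Finite) (hA : ∀ i, FODefinable (A i)) :
    FODefinable fun 𝔐 a b => ∀ i ∈ X, A i 𝔐 a b := by
  induction X, hX using Set.Finite.induction_on with
  | empty => exact (const True).congr fun _ _ _ => by simp
  | @insert i X _ _ ih => exact ((hA i).and ih).congr fun _ _ _ => by simp

theorem forall_finite {ι : Type} [Finite ι]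
    {A : ι → (𝔐 : RelModel P) → (Fin n → 𝔐.W) → (Fin m → 𝔐.S) → Prop}
    (hA : ∀ i, FODefinable (A i)) : FODefinable fun 𝔐 a b => ∀ i, A i 𝔐 a b :=
  (forall_mem Set.univ Set.finite_univ hA).congr fun _ _ _ => by simp

theorem exists_mem {ι : Type} [Finite ι]
    {A : ι → (𝔐 : RelModel P) → (Fin n → 𝔐.W) → (Fin m → 𝔐.S) → Prop} (X : Set ι)
    (hA : ∀ i, FODefinable (A i)) : FODefinable fun 𝔐 a b => ∃ i ∈ X, A i 𝔐 a b :=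
  (forall_mem X X.toFinite fun i => (hA i).not).not.congr fun _ _ _ => by simp

theorem existsW {A : (𝔐 : RelModel P) → (Fin (n + 1) → 𝔐.W) → (Fin m → 𝔐.S) → Prop}
    (hA : FODefinable A) : FODefinable fun 𝔐 a b => ∃ w, A 𝔐 (Fin.cons w a) b := by
  obtain ⟨φ, hφ⟩ := hA.not
  have hall : FODefinable fun 𝔐 a b => ∀ w : 𝔐.W, ¬ A 𝔐 (Fin.cons w a) b :=
    ⟨.allW φ, fun 𝔐 a b => forall_congr' fun w => hφ 𝔐 _ b⟩
  exact hall.not.congr fun _ _ _ => by simp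

theorem existsS {A : (𝔐 : RelModel P) → (Fin n → 𝔐.W) → (Fin (m + 1) → 𝔐.S) → Prop}
    (hA : FODefinable A) : FODefinable fun 𝔐 a b => ∃ s, A 𝔐 a (Fin.cons s b) := by
  obtain ⟨φ, hφ⟩ := hA.not
  have hall : FODefinable fun 𝔐 a b => ∀ s : 𝔐.S, ¬ A 𝔐 a (Fin.cons s b) :=
    ⟨.allS φ, fun 𝔐 a b => forall_congr' fun s => hφ 𝔐 a _⟩
  exact hall.not.congr fun _ _ _ => by simp

end FODefinable

theorem foDefinable_realised {P : Type} [Finite P] {k : ℕ}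
    (ih : ∀ (τ : InqType P k) (n m : ℕ) (i : Fin n),
      FODefinable (m := m) fun 𝔐 a _ => 𝔐.toInq.type k (a i) = τ)
    (Θ : Set (InqType P k)) (n m : ℕ) (i : Fin n) :
    FODefinable (m := m) fun 𝔐 a _ =>
      ∃ s ∈ 𝔐.toInq.Sig (a i), 𝔐.toInq.type k '' s = Θ := by
  have := InqType.finite (P := P) k
  have hrel : FODefinable (P := P) (n := n) (m := m + 1)
      fun 𝔐 a b => (b 0 : Set 𝔐.W) ∈ 𝔐.E (a i) :=
    ⟨.rel i 0, fun _ _ _ => Iff.rfl⟩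
  have hmem : FODefinable (P := P) (n := n + 1) (m := m + 1)
      fun 𝔐 a b => a 0 ∈ (b 0 : Set 𝔐.W) :=
    ⟨.mem 0 0, fun _ _ _ => Iff.rfl⟩
  refine (hrel.and (FODefinable.forall_mem Θ Θ.toFinite fun τ =>
    (hmem.and (ih τ _ _ 0)).existsW)).existsS.congr fun 𝔐 a b => ?_
  refine (exists_image_type_eq_iff 𝔐.toInq k (a i) Θ).trans ?_
  constructor
  · rintro ⟨s, hs, h⟩
    exact ⟨⟨s, 𝔐.E_sub _ hs⟩, hs, h⟩
  · rintro ⟨s, hs, h⟩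
    exact ⟨s.1, hs, h⟩

theorem foDefinable_type_eq {P : Type} [Finite P] (k : ℕ) (τ : InqType P k) (n m : ℕ)
    (i : Fin n) : FODefinable (m := m) fun 𝔐 a _ => 𝔐.toInq.type k (a i) = τ := by
  have hatom : ∀ (n m : ℕ) (i : Fin n) (p : P),
      FODefinable (m := m) fun 𝔐 a _ => a i ∈ 𝔐.toInq.V p :=
    fun n m i p => ⟨.atom p i, fun _ _ _ => Iff.rfl⟩
  induction k generalizing n m with
  | zero =>
    exact (FODefinable.forall_finite fun p =>
      (hatom n m i p).iff (.const (p ∈ show Set P from τ))).congr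
      fun 𝔐 a _ => type_zero_eq_iff 𝔐.toInq (a i) τ
  | succ k ih =>
    have := InqType.finite (P := P) k
    obtain ⟨τ₁, τ₂⟩ := τ
    exact ((FODefinable.forall_finite fun p => (hatom n m i p).iff (.const (p ∈ τ₁))).and
      (FODefinable.forall_finite fun Θ =>
        (foDefinable_realised ih Θ n m i).iff (.const (Θ ∈ τ₂)))).congr
      fun 𝔐 a _ => type_succ_eq_iff 𝔐.toInq k (a i) (τ₁, τ₂)

/-! ### Layered products

The graph `Node ℓ` consists of two directed paths of length `ℓ`; the path with label `true` ends in
a loop, the path with label `false` in a dead end. -/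

/-- Positions in a layered product: a level and a label. -/
abbrev Node (ℓ : ℕ) : Type := Fin (ℓ + 1) × Bool

/-- The successor relation on positions. -/
def Node.Next {ℓ : ℕ} (g h : Node ℓ) : Prop :=
  g.2 = h.2 ∧ ((g.1 : ℕ) + 1 = h.1 ∨ ((g.1 : ℕ) = ℓ ∧ (h.1 : ℕ) = ℓ ∧ g.2 = true))

theorem Node.Next.unique {ℓ : ℕ} {g h h' : Node ℓ} (hg : g.Next h) (hg' : g.Next h') : h = h' := by
  obtain ⟨⟨i, hi⟩, c⟩ := g
  obtain ⟨⟨j, hj⟩, d⟩ := h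
  obtain ⟨⟨k, hk⟩, e⟩ := h'
  simp only [Node.Next] at hg hg'
  obtain ⟨rfl, hg⟩ := hg
  obtain ⟨rfl, hg'⟩ := hg'
  simp only [Prod.mk.injEq, Fin.mk.injEq, and_true]
  omega

/-- The copy of a set of worlds at a given position. -/
def slice {W : Type} {ℓ : ℕ} (s : Set W) (g : Node ℓ) : Set (W × Node ℓ) :=
  {x | x.1 ∈ s ∧ x.2 = g}

theorem eq_slice_of_subset {W : Type} {ℓ : ℕ} {s : Set W} {g : Node ℓ} {t : Set (W × Node ℓ)}
    (h : t ⊆ slice s g) : t = slice {u | (u, g) ∈ t} g := by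
  ext ⟨u, k⟩
  constructor
  · intro hu
    obtain rfl : k = g := (h hu).2
    exact ⟨hu, rfl⟩
  · rintro ⟨hu, rfl⟩
    exact hu

theorem slice_eq_empty_iff {W : Type} {ℓ : ℕ} {s : Set W} {g : Node ℓ} :
    slice s g = ∅ ↔ s = ∅ := by
  constructor
  · intro h
    exact Set.eq_empty_of_forall_notMem fun u hu =>
      Set.eq_empty_iff_forall_notMem.1 h (u, g) ⟨hu, rfl⟩
  · rintro rfl
    exact Set.eq_empty_of_forall_notMem fun x hx => hx.1

theorem slice_eq_slice_iff {W : Type} {ℓ : ℕ} {s t : Set W} {g h : Node ℓ} :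
    slice s g = slice t h ↔ s = t ∧ (s = ∅ ∨ g = h) := by
  constructor
  · intro e
    have hst : ∀ u ∈ s, u ∈ t ∧ g = h := fun u hu =>
      e.subset (show (u, g) ∈ slice s g from ⟨hu, rfl⟩)
    have hts : ∀ u ∈ t, u ∈ s := fun u hu =>
      (e.superset (show (u, h) ∈ slice t h from ⟨hu, rfl⟩)).1
    refine ⟨Set.Subset.antisymm (fun u hu => (hst u hu).1) hts, ?_⟩
    rcases s.eq_empty_or_nonempty with h | ⟨u, hu⟩
    · exact Or.inl h
    · exact Or.inr (hst u hu).2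
  · rintro ⟨rfl, rfl | rfl⟩
    · rw [slice_eq_empty_iff.2 rfl, slice_eq_empty_iff.2 rfl]
    · rfl

/-- The product of a relational model with `Node ℓ`: successor states of a world are copied to the
next position, and worlds at the dead end only have the empty successor state. -/
def RelModel.layered {P : Type} (𝔐 : RelModel P) (ℓ : ℕ) : RelModel P where
  W := 𝔐.W × Node ℓ
  S := {s | ∃ s₀ g, s = slice s₀ g}
  E x := {s | s = ∅ ∨ ∃ s₀ ∈ 𝔐.E x.1, ∃ g, x.2.Next g ∧ s = slice s₀ g}
  V p := {x | x.1 ∈ 𝔐.V p}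
  wNonempty := 𝔐.wNonempty.map fun w => (w, (0, true))
  sNonempty := ⟨_, ∅, (0, true), rfl⟩
  E_sub := by
    rintro x s (rfl | ⟨s₀, -, g, -, rfl⟩)
    · exact ⟨∅, (0, true), (slice_eq_empty_iff.2 rfl).symm⟩
    · exact ⟨s₀, g, rfl⟩
  E_nonempty _ := ⟨∅, Or.inl rfl⟩
  downward := by
    rintro x s (rfl | ⟨s₀, hs₀, g, hg, rfl⟩) t ht
    · obtain rfl := Set.subset_empty_iff.1 ht
      exact ⟨⟨∅, (0, true), (slice_eq_empty_iff.2 rfl).symm⟩, Or.inl rfl⟩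
    · have e := eq_slice_of_subset ht
      refine ⟨⟨_, g, e⟩, Or.inr ⟨_, ?_, g, hg, e⟩⟩
      exact (𝔐.downward x.1 s₀ hs₀ _ fun u hu => (ht hu).1).2

theorem slice_mem_layered_E_iff {P : Type} {𝔐 : RelModel P} {ℓ : ℕ} {u : 𝔐.W} {g h : Node ℓ}
    {s : Set 𝔐.W} : slice s h ∈ (𝔐.layered ℓ).E (u, g) ↔ s = ∅ ∨ s ∈ 𝔐.E u ∧ g.Next h := by
  constructor
  · rintro (e | ⟨s₀, hs₀, k, hk, e⟩)
    · exact Or.inl (slice_eq_empty_iff.1 e)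
    · obtain ⟨rfl, h | rfl⟩ := slice_eq_slice_iff.1 e
      · exact Or.inl h
      · exact Or.inr ⟨hs₀, hk⟩
  · rintro (rfl | ⟨hs, hg⟩)
    · exact Or.inl (slice_eq_empty_iff.2 rfl)
    · exact Or.inr ⟨s, hs, h, hg, rfl⟩

theorem locallyFull_layered {P : Type} (𝔐 : RelModel P) (ℓ : ℕ) : LocallyFull (𝔐.layered ℓ) := by
  rintro ⟨u, g⟩ t ht
  rcases t.eq_empty_or_nonempty with rfl | ⟨⟨v, h⟩, hv⟩
  · exact ⟨∅, (0, true), (slice_eq_empty_iff.2 rfl).symm⟩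
  · have next : ∀ x ∈ t, g.Next x.2 := fun x hx => by
      obtain ⟨s, rfl | ⟨s₀, -, k, hk, rfl⟩, hxs⟩ := ht hx
      · exact hxs.elim
      · exact hxs.2 ▸ hk
    have hsub : t ⊆ slice Set.univ h := fun x hx => ⟨trivial, (next x hx).unique (next _ hv)⟩
    exact ⟨_, h, eq_slice_of_subset hsub⟩

theorem finite_layered {P : Type} (𝔐 : RelModel P) (ℓ : ℕ) [Finite 𝔐.W] :
    Finite (𝔐.layered ℓ).W :=
  inferInstanceAs (Finite (𝔐.W × Node ℓ))

/-- The copy of a world at level `0` of the path with label `c`. -/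
def RelModel.base {P : Type} (𝔐 : RelModel P) (ℓ : ℕ) (c : Bool) (w : 𝔐.W) : (𝔐.layered ℓ).W :=
  (w, (0, c))

theorem Node.exists_next {ℓ : ℕ} {g : Node ℓ} (hg : g.2 = true) :
    ∃ h : Node ℓ, g.Next h := by
  obtain ⟨⟨i, hi⟩, c⟩ := g
  rcases Nat.lt_or_ge i ℓ with h | h
  · exact ⟨(⟨i + 1, by omega⟩, c), rfl, Or.inl rfl⟩
  · exact ⟨(⟨i, hi⟩, c), rfl, Or.inr ⟨by simp; omega, by simp; omega, hg⟩⟩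

/-- A world is bisimilar to its copy on the path that ends in a loop. -/
theorem bisimW_base_true {P : Type} (𝔐 : RelModel P) (ℓ : ℕ) (w : 𝔐.W) :
    BisimW 𝔐.toInq (𝔐.layered ℓ).toInq w (𝔐.base ℓ true w) := by
  refine ⟨fun u x => x.1 = u ∧ x.2.2 = true, ?_, rfl, rfl⟩
  rintro _ ⟨u, g⟩ ⟨rfl, hg⟩
  have rel_slice : ∀ (s : Set 𝔐.W) (h : Node ℓ), h.2 = true →
      StateRel (fun u (x : 𝔐.W × Node ℓ) => x.1 = u ∧ x.2.2 = true) s (slice s h) := fun s h hh =>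
    ⟨fun v hv => ⟨(v, h), ⟨hv, rfl⟩, rfl, hh⟩, fun x hx => ⟨x.1, hx.1, rfl, hx.2 ▸ hh⟩⟩
  refine ⟨fun p => Iff.rfl, fun s hs => ?_, ?_⟩
  · obtain ⟨h, hh⟩ := Node.exists_next hg
    exact ⟨slice s h, Or.inr ⟨s, hs, h, hh, rfl⟩, rel_slice s h (hh.1 ▸ hg)⟩
  · rintro s' (rfl | ⟨s, hs, h, hh, rfl⟩)
    · obtain ⟨s, hs⟩ := 𝔐.E_nonempty u
      refine ⟨∅, (𝔐.downward u s hs ∅ (Set.empty_subset s)).2, ?_, ?_⟩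
      · exact fun v hv => hv.elim
      · exact fun v hv => hv.elim
    · exact ⟨s, hs, rel_slice s h (hh.1 ▸ hg)⟩

/-- The relation between layered products that is used in `bisimW_base_false`. -/
def SameTypeToEnd {P : Type} (𝔐 𝔐' : RelModel P) (ℓ : ℕ) (x : (𝔐.layered ℓ).W)
    (x' : (𝔐'.layered ℓ).W) : Prop :=
  x.2 = x'.2 ∧ x.2.2 = false ∧
    𝔐.toInq.type (ℓ - x.2.1) x.1 = 𝔐'.toInq.type (ℓ - x.2.1) x'.1

theorem SameTypeToEnd.symm {P : Type} {𝔐 𝔐' : RelModel P} {ℓ : ℕ} {x : (𝔐.layered ℓ).W}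
    {x' : (𝔐'.layered ℓ).W} (h : SameTypeToEnd 𝔐 𝔐' ℓ x x') : SameTypeToEnd 𝔐' 𝔐 ℓ x' x := by
  obtain ⟨u, g⟩ := x
  obtain ⟨u', g'⟩ := x'
  obtain ⟨h₁, h₂, h₃⟩ := h
  obtain rfl : g = g' := h₁
  exact ⟨rfl, h₂, h₃.symm⟩

theorem SameTypeToEnd.forth {P : Type} {𝔐 𝔐' : RelModel P} {ℓ : ℕ} {x : (𝔐.layered ℓ).W}
    {x' : (𝔐'.layered ℓ).W} (h : SameTypeToEnd 𝔐 𝔐' ℓ x x') (s : Set (𝔐.layered ℓ).W)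
    (hs : s ∈ (𝔐.layered ℓ).E x) :
    ∃ s' ∈ (𝔐'.layered ℓ).E x', StateRel (SameTypeToEnd 𝔐 𝔐' ℓ) s s' := by
  obtain ⟨u, g⟩ := x
  obtain ⟨u', g'⟩ := x'
  obtain ⟨h₁, h₂, h₃⟩ := h
  obtain rfl : g = g' := h₁
  rcases hs with rfl | ⟨s₀, hs₀, k, hk, rfl⟩
  · refine ⟨∅, Or.inl rfl, ?_, ?_⟩
    · exact fun v hv => hv.elim
    · exact fun v hv => hv.elim
  · have hlevel : (g.1 : ℕ) + 1 = k.1 := by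
      rcases hk.2 with h | h
      · exact h
      · exact absurd (h₂.symm.trans h.2.2) Bool.false_ne_true
    have hk2 : k.2 = false := hk.1.symm.trans h₂
    have hsub : ℓ - (g.1 : ℕ) = (ℓ - (k.1 : ℕ)) + 1 := by
      have := k.1.isLt
      omega
    have htype : 𝔐.toInq.type (ℓ - (k.1 : ℕ) + 1) u = 𝔐'.toInq.type (ℓ - (k.1 : ℕ) + 1) u' :=
      hsub ▸ h₃
    obtain ⟨s₀', hs₀', hs⟩ :=
      ((type_succ_eq_type_succ_iff 𝔐.toInq 𝔐'.toInq _ u u').1 htype).2.1 s₀ hs₀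
    replace hs := (stateRel_type_iff 𝔐.toInq 𝔐'.toInq _ s₀ s₀').2 hs
    refine ⟨slice s₀' k, Or.inr ⟨s₀', hs₀', k, hk, rfl⟩, ?_, ?_⟩
    · rintro ⟨v, j⟩ ⟨hv, rfl⟩
      obtain ⟨v', hv', e⟩ := hs.1 v hv
      exact ⟨(v', j), ⟨hv', rfl⟩, rfl, hk2, e⟩
    · rintro ⟨v', j⟩ ⟨hv', rfl⟩
      obtain ⟨v, hv, e⟩ := hs.2 v' hv'
      exact ⟨(v, j), ⟨hv, rfl⟩, rfl, hk2, e⟩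

/-- On the path that ends in a dead end, worlds of equal depth-`ℓ` type have bisimilar copies. -/
theorem bisimW_base_false {P : Type} {𝔐 𝔐' : RelModel P} {ℓ : ℕ} {w : 𝔐.W} {w' : 𝔐'.W}
    (h : 𝔐.toInq.type ℓ w = 𝔐'.toInq.type ℓ w') :
    BisimW (𝔐.layered ℓ).toInq (𝔐'.layered ℓ).toInq (𝔐.base ℓ false w) (𝔐'.base ℓ false w') := by
  refine ⟨SameTypeToEnd 𝔐 𝔐' ℓ, fun x x' hx => ⟨?_, hx.forth, fun s' hs' => ?_⟩, rfl, rfl, h⟩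
  · exact mem_V_iff_of_type_eq (M := 𝔐.toInq) (M' := 𝔐'.toInq) hx.2.2
  · obtain ⟨s, hs, hss'⟩ := hx.symm.forth s' hs'
    exact ⟨s, hs, fun v hv => (hss'.2 v hv).imp fun _ h => ⟨h.1, h.2.symm⟩,
      fun v hv => (hss'.1 v hv).imp fun _ h => ⟨h.1, h.2.symm⟩⟩

/-! ### The two copies of a world are elementarily equivalent up to a quantifier rank -/

/-- Quantifier rank of first-order formulas. -/
def FO.rank {P : Type} : {n m : ℕ} → FO P n m → ℕ
  | _, _, .eqW _ _ => 0
  | _, _, .eqS _ _ => 0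
  | _, _, .rel _ _ => 0
  | _, _, .mem _ _ => 0
  | _, _, .atom _ _ => 0
  | _, _, .fal => 0
  | _, _, .imp φ ψ => max φ.rank ψ.rank
  | _, _, .allW φ => φ.rank + 1
  | _, _, .allS φ => φ.rank + 1

/-- Positions related by exchanging the labels at levels up to `t`, where levels strictly between
`t` and `t + 2 ^ (r + 1)` do not occur. -/
def Node.Match {ℓ : ℕ} (r t : ℕ) (g g' : Node ℓ) : Prop :=
  g.1 = g'.1 ∧ (((g.1 : ℕ) ≤ t ∧ g'.2 = !g.2) ∨ (t + 2 ^ (r + 1) ≤ (g.1 : ℕ) ∧ g'.2 = g.2))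

namespace Node.Match

variable {ℓ r t : ℕ} {g g' h h' : Node ℓ}

theorem symm (hg : Match r t g g') : Match r t g' g := by
  obtain ⟨i, c⟩ := g
  obtain ⟨i', c'⟩ := g'
  obtain ⟨h₁, h₂⟩ := hg
  obtain rfl : i = i' := h₁
  refine ⟨rfl, h₂.imp (fun h => ⟨h.1, ?_⟩) fun h => ⟨h.1, h.2.symm⟩⟩
  have hc : c' = !c := h.2
  simp [hc]

theorem eq_iff (hg : Match r t g g') (hh : Match r t h h') : g = h ↔ g' = h' := by
  have hpow : 0 < 2 ^ (r + 1) := by positivity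
  obtain ⟨⟨i, hi⟩, c⟩ := g
  obtain ⟨⟨j, hj⟩, d⟩ := h
  obtain ⟨i', c'⟩ := g'
  obtain ⟨j', d'⟩ := h'
  obtain ⟨rfl, hg⟩ := hg
  obtain ⟨rfl, hh⟩ := hh
  simp only [Prod.mk.injEq, Fin.mk.injEq] at *
  rcases hg with ⟨h₁, rfl⟩ | ⟨h₁, rfl⟩ <;> rcases hh with ⟨h₂, rfl⟩ | ⟨h₂, rfl⟩
  · simp
  · exact ⟨fun h => by omega, fun h => by omega⟩
  · exact ⟨fun h => by omega, fun h => by omega⟩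
  · rfl

theorem next_iff (ht : t + 2 ^ (r + 1) ≤ ℓ) (hg : Match r t g g') (hh : Match r t h h') :
    g.Next h ↔ g'.Next h' := by
  have hpow : 2 ≤ 2 ^ (r + 1) := by
    have : 0 < 2 ^ r := by positivity
    omega
  obtain ⟨⟨i, hi⟩, c⟩ := g
  obtain ⟨⟨j, hj⟩, d⟩ := h
  obtain ⟨i', c'⟩ := g'
  obtain ⟨j', d'⟩ := h'
  obtain ⟨rfl, hg⟩ := hg
  obtain ⟨rfl, hh⟩ := hh
  simp only [Node.Next] at *
  rcases hg with ⟨h₁, rfl⟩ | ⟨h₁, rfl⟩ <;> rcases hh with ⟨h₂, rfl⟩ | ⟨h₂, rfl⟩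
  · have : i ≠ ℓ := by omega
    simp [this]
  · exact ⟨fun h => by omega, fun h => by omega⟩
  · exact ⟨fun h => by omega, fun h => by omega⟩
  · rfl

/-- One round of the back-and-forth game on positions. -/
theorem exists_extension (ht : t + 2 ^ (r + 1 + 1) ≤ ℓ) (g : Node ℓ) :
    ∃ t', t' + 2 ^ (r + 1) ≤ ℓ ∧ (∀ h h' : Node ℓ, Match (r + 1) t h h' → Match r t' h h') ∧
      ∃ g', Match r t' g g' := by
  have hpow : 2 ^ (r + 1 + 1) = 2 ^ (r + 1) + 2 ^ (r + 1) := by ring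
  have hpos : 0 < 2 ^ (r + 1) := by positivity
  rcases Nat.le_total (g.1 : ℕ) (t + 2 ^ (r + 1)) with hg | hg
  · refine ⟨t + 2 ^ (r + 1), by omega, ?_, (g.1, !g.2), rfl, Or.inl ⟨hg, rfl⟩⟩
    exact fun h h' hh => ⟨hh.1, hh.2.imp (fun h => ⟨by omega, h.2⟩) fun h => ⟨by omega, h.2⟩⟩
  · refine ⟨t, by omega, ?_, g, rfl, Or.inr ⟨hg, rfl⟩⟩
    exact fun h h' hh => ⟨hh.1, hh.2.imp (fun h => ⟨by omega, h.2⟩) fun h => ⟨by omega, h.2⟩⟩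

end Node.Match

/-- Copies of the same world at matching positions. -/
def MatchW {W : Type} {ℓ : ℕ} (r t : ℕ) (x y : W × Node ℓ) : Prop :=
  x.1 = y.1 ∧ Node.Match r t x.2 y.2

/-- Copies of the same set of worlds at matching positions. -/
def MatchS {W : Type} {ℓ : ℕ} (r t : ℕ) (s s' : Set (W × Node ℓ)) : Prop :=
  ∃ s₀ g h, s = slice s₀ g ∧ s' = slice s₀ h ∧ Node.Match r t g h

/-- Matching assignments satisfy the same formulas of bounded quantifier rank. -/
theorem FOsat_layered_of_match {P : Type} {𝔐 : RelModel P} {ℓ : ℕ} {n m : ℕ} (φ : FO P n m)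
    {r t : ℕ} (hr : φ.rank ≤ r) (ht : t + 2 ^ (r + 1) ≤ ℓ)
    {a a' : Fin n → (𝔐.layered ℓ).W} {b b' : Fin m → (𝔐.layered ℓ).S}
    (ha : ∀ i, MatchW r t (a i) (a' i))
    (hb : ∀ j, MatchS r t (b j).1 (b' j).1) :
    FOsat (𝔐.layered ℓ).S (𝔐.layered ℓ).E (𝔐.layered ℓ).V φ a b ↔
      FOsat (𝔐.layered ℓ).S (𝔐.layered ℓ).E (𝔐.layered ℓ).V φ a' b' := by
  induction φ generalizing r t with
  | eqW i j =>
    refine Prod.ext_iff.trans (Iff.trans ?_ Prod.ext_iff.symm)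
    exact and_congr (by rw [(ha i).1, (ha j).1]) ((ha i).2.eq_iff (ha j).2)
  | eqS i j =>
    obtain ⟨s, g, g', e, e', hg⟩ := hb i
    obtain ⟨s₁, h, h', e₁, e₁', hh⟩ := hb j
    simp only [FOsat]
    refine Subtype.ext_iff.trans (Iff.trans ?_ Subtype.ext_iff.symm)
    rw [e, e', e₁, e₁']
    refine slice_eq_slice_iff.trans (Iff.trans ?_ slice_eq_slice_iff.symm)
    rw [hg.eq_iff hh]
  | rel i j =>
    obtain ⟨s, g, g', e, e', hg⟩ := hb j
    obtain ⟨h₁, h₂⟩ := ha i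
    simp only [FOsat]
    rw [e, e']
    refine slice_mem_layered_E_iff.trans (Iff.trans ?_ slice_mem_layered_E_iff.symm)
    rw [h₁, h₂.next_iff ht hg]
  | mem i j =>
    obtain ⟨s, g, g', e, e', hg⟩ := hb j
    simp only [FOsat]
    rw [e, e']
    exact and_congr (by rw [(ha i).1]) ((ha i).2.eq_iff hg)
  | atom p i =>
    change (a i).1 ∈ 𝔐.V p ↔ (a' i).1 ∈ 𝔐.V p
    rw [(ha i).1]
  | fal => rfl
  | imp φ ψ ihφ ihψ =>
    exact imp_congr (ihφ ((le_max_left _ _).trans hr) ht ha hb)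
      (ihψ ((le_max_right _ _).trans hr) ht ha hb)
  | allW φ ih =>
    obtain ⟨r, rfl⟩ := Nat.exists_eq_add_of_le' (le_trans (Nat.le_add_left 1 _) hr)
    have step : ∀ (t' : ℕ) (x x' : (𝔐.layered ℓ).W), t' + 2 ^ (r + 1) ≤ ℓ →
        (∀ h h' : Node ℓ, Node.Match (r + 1) t h h' → Node.Match r t' h h') → MatchW r t' x x' →
        (FOsat (𝔐.layered ℓ).S (𝔐.layered ℓ).E (𝔐.layered ℓ).V φ (Fin.cons x a) b ↔
          FOsat (𝔐.layered ℓ).S (𝔐.layered ℓ).E (𝔐.layered ℓ).V φ (Fin.cons x' a') b') := by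
      intro t' x x' ht' hmono hx
      refine ih (Nat.le_of_succ_le_succ hr) ht' (fun i => ?_) fun j => ?_
      · refine Fin.cases hx (fun i => ?_) i
        exact ⟨(ha i).1, hmono _ _ (ha i).2⟩
      · obtain ⟨s, g, g', e, e', hg⟩ := hb j
        exact ⟨s, g, g', e, e', hmono _ _ hg⟩
    constructor
    · rintro h ⟨u, g⟩
      obtain ⟨t', ht', hmono, g', hg⟩ := Node.Match.exists_extension ht g
      exact (step t' (u, g') (u, g) ht' hmono ⟨rfl, hg.symm⟩).1 (h _)
    · rintro h ⟨u, g⟩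
      obtain ⟨t', ht', hmono, g', hg⟩ := Node.Match.exists_extension ht g
      exact (step t' (u, g) (u, g') ht' hmono ⟨rfl, hg⟩).2 (h _)
  | allS φ ih =>
    obtain ⟨r, rfl⟩ := Nat.exists_eq_add_of_le' (le_trans (Nat.le_add_left 1 _) hr)
    have step : ∀ (t' : ℕ) (x x' : (𝔐.layered ℓ).S), t' + 2 ^ (r + 1) ≤ ℓ →
        (∀ h h' : Node ℓ, Node.Match (r + 1) t h h' → Node.Match r t' h h') →
        MatchS r t' x.1 x'.1 →
        (FOsat (𝔐.layered ℓ).S (𝔐.layered ℓ).E (𝔐.layered ℓ).V φ a (Fin.cons x b) ↔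
          FOsat (𝔐.layered ℓ).S (𝔐.layered ℓ).E (𝔐.layered ℓ).V φ a' (Fin.cons x' b')) := by
      intro t' x x' ht' hmono hx
      refine ih (Nat.le_of_succ_le_succ hr) ht' (fun i => ?_) fun j => ?_
      · exact ⟨(ha i).1, hmono _ _ (ha i).2⟩
      · refine Fin.cases hx (fun j => ?_) j
        obtain ⟨s, g, g', e, e', hg⟩ := hb j
        exact ⟨s, g, g', e, e', hmono _ _ hg⟩
    constructor
    · rintro h ⟨_, s, g, rfl⟩
      obtain ⟨t', ht', hmono, g', hg⟩ := Node.Match.exists_extension ht g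
      exact (step t' ⟨slice s g', s, g', rfl⟩ _ ht' hmono ⟨s, g', g, rfl, rfl, hg.symm⟩).1 (h _)
    · rintro h ⟨_, s, g, rfl⟩
      obtain ⟨t', ht', hmono, g', hg⟩ := Node.Match.exists_extension ht g
      exact (step t' _ ⟨slice s g', s, g', rfl⟩ ht' hmono ⟨s, g, g', rfl, rfl, hg⟩).2 (h _)

theorem satW_base_true_iff {P : Type} (𝔐 : RelModel P) (φ : FO P 1 0) (w : 𝔐.W) :
    satW (𝔐.layered (2 ^ (φ.rank + 1))) φ (𝔐.base _ true w) ↔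
      satW (𝔐.layered (2 ^ (φ.rank + 1))) φ (𝔐.base _ false w) :=
  FOsat_layered_of_match φ (t := 0) le_rfl (by simp)
    (fun _ => ⟨rfl, rfl, Or.inl ⟨le_rfl, rfl⟩⟩) fun j => j.elim0

/-- Over a class closed under layered products, a bisimulation-invariant first-order property is
determined by types of a fixed depth. -/
theorem exists_type_invariant {P : Type} {C : RelModel P → Prop}
    (hC : ∀ 𝔐 ℓ, C 𝔐 → C (RelModel.layered 𝔐 ℓ))
    {K : (𝔐 : RelModel P) → 𝔐.W → Prop} {φ : FO P 1 0}
    (hφ : ∀ (𝔐 : RelModel P) (w : 𝔐.W), C 𝔐 → (K 𝔐 w ↔ satW 𝔐 φ w))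
    (hK : ∀ (𝔐 𝔐' : RelModel P) (w : 𝔐.W) (w' : 𝔐'.W),
      K 𝔐 w → C 𝔐' → BisimW 𝔐.toInq 𝔐'.toInq w w' → K 𝔐' w') :
    ∃ n, ∀ (𝔐 𝔐' : RelModel P) (w : 𝔐.W) (w' : 𝔐'.W), C 𝔐 → C 𝔐' →
      𝔐.toInq.type n w = 𝔐'.toInq.type n w' → K 𝔐 w → K 𝔐' w' := by
  refine ⟨2 ^ (φ.rank + 1), fun 𝔐 𝔐' w w' h𝔐 h𝔐' htype hw => ?_⟩
  have hL := hC 𝔐 (2 ^ (φ.rank + 1)) h𝔐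
  have hL' := hC 𝔐' (2 ^ (φ.rank + 1)) h𝔐'
  have h₁ := hK _ _ _ _ hw hL (bisimW_base_true 𝔐 _ w)
  rw [hφ _ _ hL, satW_base_true_iff, ← hφ _ _ hL] at h₁
  have h₂ := hK _ _ _ _ h₁ hL' (bisimW_base_false htype)
  rw [hφ _ _ hL', ← satW_base_true_iff, ← hφ _ _ hL'] at h₂
  have hbisim := (bisimW_base_true 𝔐' (2 ^ (φ.rank + 1)) w').symm
  exact hK _ _ _ _ h₂ h𝔐' hbisim

/-- **Van Benthem–style characterisation of InqML**: over each of the four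
classes (all / finite / locally full / finite locally full relational
inquisitive modal models), a class `K` of world-pointed models from `C` is
InqML-definable iff it is FO-definable and `~`-invariant over `C`. -/
theorem van_benthem_characterisation {P : Type} [Finite P]
    (C : RelModel P → Prop)
    (hC : C = (fun _ => True) ∨ C = (fun 𝔐 => Finite 𝔐.W) ∨
          C = (fun 𝔐 => LocallyFull 𝔐) ∨
          C = (fun 𝔐 => Finite 𝔐.W ∧ LocallyFull 𝔐))
    (K : (𝔐 : RelModel P) → 𝔐.W → Prop)
    (hK : ∀ (𝔐 : RelModel P) (w : 𝔐.W), K 𝔐 w → C 𝔐) :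
    (∃ ψ : InqForm P, ∀ (𝔐 : RelModel P) (w : 𝔐.W), C 𝔐 →
        (K 𝔐 w ↔ truth 𝔐.toInq w ψ)) ↔
    (∃ φ : FO P 1 0,
        (∀ (𝔐 : RelModel P) (w : 𝔐.W), C 𝔐 → (K 𝔐 w ↔ satW 𝔐 φ w)) ∧
        (∀ (𝔐 𝔐' : RelModel P) (w : 𝔐.W) (w' : 𝔐'.W),
          K 𝔐 w → C 𝔐' → BisimW 𝔐.toInq 𝔐'.toInq w w' → K 𝔐' w')) := by
  constructor
  · rintro ⟨ψ, hψ⟩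
    have := InqType.finite (P := P) (mdepth ψ)
    obtain ⟨φ, hφ⟩ := FODefinable.exists_mem
      {τ | ∃ (𝔐 : RelModel P) (w : 𝔐.W), C 𝔐 ∧ K 𝔐 w ∧ 𝔐.toInq.type (mdepth ψ) w = τ}
      fun τ => foDefinable_type_eq (mdepth ψ) τ 1 0 0
    refine ⟨φ, fun 𝔐 w h𝔐 => ?_, fun 𝔐 𝔐' w w' hw h𝔐' hbisim => ?_⟩
    · refine Iff.trans ?_ (hφ 𝔐 (fun _ => w) fun i => i.elim0).symm
      constructor
      · exact fun hw => ⟨_, ⟨𝔐, w, h𝔐, hw, rfl⟩, rfl⟩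
      · rintro ⟨_, ⟨𝔐', w', h𝔐', hw', rfl⟩, htype⟩
        exact (hψ 𝔐 w h𝔐).2 ((truth_iff_of_type_eq htype).2 ((hψ 𝔐' w' h𝔐').1 hw'))
    · exact (hψ 𝔐' w' h𝔐').2 ((truth_iff_of_type_eq (hbisim.type_eq _)).1
        ((hψ 𝔐 w (hK 𝔐 w hw)).1 hw))
  · rintro ⟨φ, hφ, hinv⟩
    have hclosed : ∀ 𝔐 ℓ, C 𝔐 → C (RelModel.layered 𝔐 ℓ) := by
      rcases hC with rfl | rfl | rfl | rfl
      · exact fun _ _ _ => trivial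
      · exact fun 𝔐 ℓ (_ : Finite 𝔐.W) => finite_layered 𝔐 ℓ
      · exact fun 𝔐 ℓ _ => locallyFull_layered 𝔐 ℓ
      · rintro 𝔐 ℓ ⟨_, -⟩
        exact ⟨finite_layered 𝔐 ℓ, locallyFull_layered 𝔐 ℓ⟩
    obtain ⟨n, hn⟩ := exists_type_invariant hclosed hφ hinv
    have := InqType.finite (P := P) n
    obtain ⟨ψ, hψ⟩ := InqDefinable.exists_mem
      {τ | ∃ (𝔐 : RelModel P) (w : 𝔐.W), C 𝔐 ∧ K 𝔐 w ∧ 𝔐.toInq.type n w = τ}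
      fun τ => inqDefinable_type_eq n τ
    refine ⟨ψ, fun 𝔐 w h𝔐 => Iff.trans ?_ (hψ 𝔐.toInq {w}).symm⟩
    constructor
    · rintro hw v rfl
      exact ⟨_, ⟨𝔐, v, h𝔐, hw, rfl⟩, rfl⟩
    · intro h
      obtain ⟨_, ⟨𝔐', w', h𝔐', hw', rfl⟩, htype⟩ := h w rfl
      exact hn 𝔐' 𝔐 w' w h𝔐' h𝔐 htype.symm hw'
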